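/- Let p, q be probability measures on a finite set X with q(x) > 0 for all x, and let φ : X → ℝⁿ satisfy ‖φ(x)‖ = 1 for all x. Let Σ_p = ∑_x p(x) φ(x)φ(x)ᵀ and Σ_q = ∑_x q(x) φ(x)φ(x)ᵀ. Then for α > 1 and λ ≥ 0, D_{α,λ}(Σ_p ‖ Σ_q) ≤ D_α(p‖q), where D_α(p‖q) = (1/(α-1)) log ∑_x p(x)^α q(x)^{1-α} is the classical Rényi divergence. -/

import Mathlib

/-!
Write `A = Σ_p`, `B = Σ_q + λI`, `X = B ^ (-γ) A B ^ (-γ)` with `γ = (α - 1) / (2α)`,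
`T = tr X ^ α` and `Q = ∑ x, p x ^ α * q x ^ (1 - α)`. Since `tr A = 1`, the claim is `T ≤ Q`
(when `T = 0`, where `Real.log 0 = 0`, it is `1 ≤ Q`, which is Jensen's inequality).

The inequality is obtained by complex interpolation. The entire function
`F z = ∑ x, q x * (p x / q x) ^ (α (1 - z)) * ⟨φ x, B ^ (-z/2) X ^ (α z) B ^ (-z/2) φ x⟩`
takes the value `tr (X ^ (α - 1) X) = T` at `z = 1 - 1/α`. On `re z = 0` the operator powers are
contractions and `‖φ x‖ = 1`, so `|F| ≤ Q`. On `re z = 1` the Cauchy–Schwarz inequality and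
`∑ x, q x φ(x) φ(x)ᵀ = Σ_q ≤ B` give `|F| ≤ tr X ^ α = T`. Hadamard's three lines theorem then
yields `T ≤ Q ^ (1/α) * T ^ (1 - 1/α)`, that is, `T ≤ Q`.

All operators are expressed in the orthonormal eigenbases of `B` and `X`, so that only scalar
complex powers occur (`sum_rpow_eigenvalues_le`). Zero eigenvalues and zero values of `p` contribute
`0` to `F`, in agreement with `Real.rpow` at the nonzero exponents used in `mpow`; in particular
a singular `B` (possible when `λ = 0`) needs no separate treatment.
-/


open Matrix

noncomputable def mpow {m : Type*} [Fintype m] [DecidableEq m] (A : Matrix m m ℝ) (r : ℝ) :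
    Matrix m m ℝ :=
  if hA : A.IsHermitian then
    (hA.eigenvectorUnitary : Matrix m m ℝ) *
      Matrix.diagonal (fun i => (hA.eigenvalues i : ℝ) ^ r) *
      star (hA.eigenvectorUnitary : Matrix m m ℝ)
  else 0

/-- Sandwiched quantum Rényi divergence of order `α`. -/
noncomputable def sandwichedRenyi {m : Type*} [Fintype m] [DecidableEq m]
    (α : ℝ) (A B : Matrix m m ℝ) : ℝ :=
  (α - 1)⁻¹ *
    Real.log ((mpow (mpow B ((1 - α) / (2 * α)) * A * mpow B ((1 - α) / (2 * α))) α).trace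
      / A.trace)

/-- Regularized sandwiched quantum Rényi divergence `D_{α,λ}(A‖B) := D_α(A‖B + λI)`. -/
noncomputable def regRenyi {m : Type*} [Fintype m] [DecidableEq m]
    (α lam : ℝ) (A B : Matrix m m ℝ) : ℝ :=
  sandwichedRenyi α A (B + lam • 1)

/-- The covariance matrix `Σ_p = ∑_x p(x) φ(x)φ(x)ᵀ` of a probability vector `p`
through a feature map `φ`. -/
noncomputable def covMatrix {X : Type*} [Fintype X] {N : ℕ}
    (φ : X → Fin N → ℝ) (p : X → ℝ) : Matrix (Fin N) (Fin N) ℝ :=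
  ∑ x, p x • Matrix.vecMulVec (φ x) (φ x)

/-! ### Weighted Parseval identities -/

/-- If the real vectors `a k`, with weights `w k`, have diagonal second-moment matrix `diag d`, then
the quadratic form `∑ k, w k ⟨v, a k⟩ ^ 2` is diagonal. -/
lemma weighted_parseval_real {I K : Type*} [Fintype I] [Fintype K] [DecidableEq I]
    (w : K → ℝ) (a : K → I → ℝ) (d : I → ℝ)
    (h : ∀ i i', ∑ k, w k * (a k i * a k i') = if i = i' then d i else 0) (v : I → ℝ) :
    ∑ k, w k * (∑ i, v i * a k i) ^ 2 = ∑ i, d i * v i ^ 2 := by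
  calc ∑ k, w k * (∑ i, v i * a k i) ^ 2
      = ∑ k, ∑ i, ∑ i', v i * v i' * (w k * (a k i * a k i')) := by
        refine Finset.sum_congr rfl fun k _ => ?_
        rw [sq, Finset.sum_mul_sum, Finset.mul_sum]
        refine Finset.sum_congr rfl fun i _ => ?_
        rw [Finset.mul_sum]
        exact Finset.sum_congr rfl fun i' _ => by ring
    _ = ∑ i, ∑ i', v i * v i' * ∑ k, w k * (a k i * a k i') := by
        rw [Finset.sum_comm]
        refine Finset.sum_congr rfl fun i _ => ?_
        rw [Finset.sum_comm]
        exact Finset.sum_congr rfl fun i' _ => by rw [Finset.mul_sum]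
    _ = ∑ i, d i * v i ^ 2 := by
        refine Finset.sum_congr rfl fun i _ => ?_
        simp only [h, mul_ite, mul_zero, Finset.sum_ite_eq, Finset.mem_univ, if_true]
        ring

/-- The complex version of `weighted_parseval_real`, for a complex coefficient vector `v`. -/
lemma weighted_parseval {I K : Type*} [Fintype I] [Fintype K] [DecidableEq I]
    (w : K → ℝ) (a : K → I → ℝ) (d : I → ℝ)
    (h : ∀ i i', ∑ k, w k * (a k i * a k i') = if i = i' then d i else 0) (v : I → ℂ) :
    ∑ k, w k * ‖∑ i, v i * (a k i : ℂ)‖ ^ 2 = ∑ i, d i * ‖v i‖ ^ 2 := by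
  have e : ∀ z : ℂ, ‖z‖ ^ 2 = z.re ^ 2 + z.im ^ 2 := fun z => by
    rw [Complex.sq_norm, Complex.normSq_apply]; ring
  simp only [e, mul_add, Finset.sum_add_distrib, Complex.re_sum, Complex.im_sum,
    Complex.re_mul_ofReal, Complex.im_mul_ofReal]
  rw [weighted_parseval_real w a d h, weighted_parseval_real w a d h]

/-! ### Complex powers on the strip `0 ≤ re z ≤ 1` -/

/-- The complex power `r ^ z` of a real `r ≥ 0`, except that `0 ^ z = 0` for every `z`, also at
`z = 0`. This makes it entire in `z` for each fixed `r`. -/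
noncomputable def epow (r : ℝ) (z : ℂ) : ℂ :=
  if r = 0 then 0 else Complex.exp (z * (Real.log r : ℂ))

@[fun_prop]
lemma differentiable_epow (r : ℝ) : Differentiable ℂ (epow r) := by
  unfold epow
  split_ifs <;> fun_prop

lemma norm_epow {r : ℝ} (hr : 0 < r) (z : ℂ) : ‖epow r z‖ = r ^ z.re := by
  rw [epow, if_neg hr.ne', Complex.norm_exp, Complex.re_mul_ofReal, Real.rpow_def_of_pos hr,
    mul_comm]

lemma norm_epow_le {r : ℝ} (hr : 0 ≤ r) (z : ℂ) : ‖epow r z‖ ≤ r ^ z.re := by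
  rcases hr.eq_or_lt with rfl | h
  · simpa [epow] using Real.rpow_nonneg le_rfl z.re
  · exact (norm_epow h z).le

lemma epow_ofReal {r : ℝ} (hr : 0 ≤ r) {s : ℝ} (hs : s ≠ 0) :
    epow r (s : ℂ) = ((r ^ s : ℝ) : ℂ) := by
  rcases hr.eq_or_lt with rfl | h
  · simp [epow, Real.zero_rpow hs]
  · rw [epow, if_neg h.ne', Real.rpow_def_of_pos h]
    push_cast
    ring_nf

/-- Boundedness on the closed strip `0 ≤ re z ≤ 1`. -/
def StripBdd (f : ℂ → ℂ) : Prop :=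
  ∃ C : ℝ, ∀ z : ℂ, 0 ≤ z.re → z.re ≤ 1 → ‖f z‖ ≤ C

lemma StripBdd.const (c : ℂ) : StripBdd fun _ => c := ⟨‖c‖, fun _ _ _ => le_rfl⟩

lemma StripBdd.mul {f g : ℂ → ℂ} (hf : StripBdd f) (hg : StripBdd g) :
    StripBdd fun z => f z * g z := by
  obtain ⟨C, hC⟩ := hf
  obtain ⟨D, hD⟩ := hg
  refine ⟨C * D, fun z h0 h1 => ?_⟩
  rw [norm_mul]
  exact mul_le_mul (hC z h0 h1) (hD z h0 h1) (norm_nonneg _)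
    ((norm_nonneg _).trans (hC z h0 h1))

lemma StripBdd.sum {ι : Type*} [Fintype ι] {f : ι → ℂ → ℂ} (hf : ∀ i, StripBdd (f i)) :
    StripBdd fun z => ∑ i, f i z := by
  choose C hC using hf
  exact ⟨∑ i, C i, fun z h0 h1 => norm_sum_le_of_le _ fun i _ => hC i z h0 h1⟩

lemma StripBdd.epow (r a b : ℝ) : StripBdd fun z => epow r (a * z + b) := by
  refine ⟨Real.exp ((|a| + |b|) * |Real.log r|), fun z h0 h1 => ?_⟩
  unfold _root_.epow
  split_ifs with h
  · rw [norm_zero]; positivity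
  · rw [Complex.norm_exp]
    refine Real.exp_le_exp.2 ((le_abs_self _).trans ?_)
    simp only [Complex.re_mul_ofReal, Complex.add_re, Complex.re_ofReal_mul, Complex.ofReal_re,
      abs_mul]
    gcongr
    refine (abs_add_le _ _).trans ?_
    gcongr ?_ + _
    rw [abs_mul, abs_of_nonneg h0]
    exact mul_le_of_le_one_right (abs_nonneg _) h1

/-! ### The interpolation argument -/

/-- The trace inequality `tr X ^ α ≤ ∑ x, p x ^ α * q x ^ (1 - α)`, written in eigenbases: `b` and
`t` are the eigenvalues of `Σ_q + λI` and of the sandwiched matrix `X`, `c x` holds the coordinates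
of `φ x` in the eigenbasis of the former, and `M` is the change of basis between the two. -/
lemma sum_rpow_eigenvalues_le {X I : Type*} [Fintype X] [Fintype I] [DecidableEq I]
    (p q : X → ℝ) (hp : ∀ x, 0 ≤ p x) (hq : ∀ x, 0 < q x)
    (α lam : ℝ) (hα : 1 < α) (hlam : 0 ≤ lam)
    (c : X → I → ℝ) (M : I → I → ℝ) (b t : I → ℝ)
    (hc : ∀ x, ∑ i, c x i ^ 2 = 1)
    (hM : ∀ i i', ∑ j, M i j * M i' j = if i = i' then 1 else 0)
    (hM' : ∀ j, ∑ i, M i j ^ 2 = 1)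
    (hb : ∀ i i', ∑ x, q x * (c x i * c x i') = if i = i' then b i - lam else 0)
    (ht : ∀ j, t j = ∑ x, p x * (∑ i, b i ^ ((1 - α) / (2 * α)) * c x i * M i j) ^ 2)
    (htpos : 0 < ∑ j, t j ^ α) :
    ∑ j, t j ^ α ≤ ∑ x, p x ^ α * q x ^ (1 - α) := by
  have hα0 : 0 < α := by linarith
  have hbl : ∀ i, 0 ≤ b i - lam := fun i => by
    have := hb i i
    rw [if_pos rfl] at this
    rw [← this]
    exact Finset.sum_nonneg fun x _ => mul_nonneg (hq x).le (mul_self_nonneg _)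
  have hb0 : ∀ i, 0 ≤ b i := fun i => by linarith [hbl i]
  have ht0 : ∀ j, 0 ≤ t j := fun j => by
    rw [ht]
    exact Finset.sum_nonneg fun x _ => mul_nonneg (hp x) (sq_nonneg _)
  set T := ∑ j, t j ^ α with hT
  have hr0 : ∀ x, 0 ≤ p x / q x := fun x => div_nonneg (hp x) (hq x).le
  set Q := ∑ x, q x * (p x / q x) ^ α with hQ
  have hQeq : ∑ x, p x ^ α * q x ^ (1 - α) = Q := by
    refine Finset.sum_congr rfl fun x _ => ?_
    rw [Real.div_rpow (hp x) (hq x).le, Real.rpow_sub (hq x), Real.rpow_one]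
    ring
  have hQ0 : 0 ≤ Q :=
    Finset.sum_nonneg fun x _ => mul_nonneg (hq x).le (Real.rpow_nonneg (hr0 x) _)
  -- `G z x j` is the coordinate along the `j`-th eigenvector of `X` of `B ^ (-z/2) φ x`.
  let v : ℂ → X → I → ℂ := fun z x i => epow (b i) ((-1 / 2 : ℝ) * z + (0 : ℝ)) * (c x i : ℂ)
  let G : ℂ → X → I → ℂ := fun z x j => ∑ i, v z x i * (M i j : ℂ)
  -- `F` interpolates between `Q` (on `re z = 0`) and `T` (on `re z = 1`), and `F (1 - 1/α) = T`.
  let F : ℂ → ℂ := fun z => ∑ x, (q x : ℂ) * (epow (p x / q x) ((-α : ℝ) * z + (α : ℝ)) *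
    ∑ j, epow (t j) ((α : ℝ) * z + (0 : ℝ)) * (G z x j * G z x j))
  have hdiff : Differentiable ℂ F := by
    have hv : ∀ r a b : ℝ, Differentiable ℂ fun z : ℂ => epow r (a * z + b) := fun r a b =>
      (differentiable_epow r).comp (by fun_prop)
    have hG : ∀ x j, Differentiable ℂ fun z => G z x j := fun x j =>
      Differentiable.fun_sum fun i _ => ((hv _ _ _).mul_const _).mul_const _
    exact Differentiable.fun_sum fun x _ => ((hv _ _ _).mul (Differentiable.fun_sum fun j _ =>
      (hv _ _ _).mul ((hG x j).mul (hG x j)))).const_mul _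
  have hbdd : StripBdd F := by
    have hG : ∀ x j, StripBdd fun z => G z x j := fun x j =>
      StripBdd.sum fun i => ((StripBdd.epow _ _ _).mul (StripBdd.const _)).mul (StripBdd.const _)
    exact StripBdd.sum fun x => (StripBdd.const _).mul ((StripBdd.epow _ _ _).mul
      (StripBdd.sum fun j => (StripBdd.epow _ _ _).mul ((hG x j).mul (hG x j))))
  have hFle : ∀ z, ‖F z‖ ≤ ∑ x, q x * ((p x / q x) ^ (α * (1 - z.re)) *
      ∑ j, t j ^ (α * z.re) * ‖G z x j‖ ^ 2) := fun z => by
    refine norm_sum_le_of_le _ fun x _ => ?_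
    rw [norm_mul, norm_mul, Complex.norm_real, Real.norm_of_nonneg (hq x).le]
    refine mul_le_mul_of_nonneg_left ?_ (hq x).le
    refine mul_le_mul ?_ ?_ (norm_nonneg _) (Real.rpow_nonneg (hr0 x) _)
    · refine (norm_epow_le (hr0 x) _).trans (le_of_eq ?_)
      congr 1
      simp only [Complex.add_re, Complex.re_ofReal_mul, Complex.ofReal_re]
      ring
    · refine norm_sum_le_of_le _ fun j _ => ?_
      rw [norm_mul, norm_mul, ← sq]
      refine mul_le_mul_of_nonneg_right ?_ (sq_nonneg _)
      refine (norm_epow_le (ht0 j) _).trans (le_of_eq ?_)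
      simp
  have hleft : ∀ z ∈ Complex.re ⁻¹' {(0 : ℝ)}, ‖F z‖ ≤ Q := fun z hz => by
    have hz : z.re = 0 := hz
    refine (hFle z).trans (Finset.sum_le_sum fun x _ => ?_)
    refine mul_le_mul_of_nonneg_left ?_ (hq x).le
    rw [hz]
    simp only [sub_zero, mul_one, mul_zero, Real.rpow_zero, one_mul]
    refine mul_le_of_le_one_right (Real.rpow_nonneg (hr0 x) _) ?_
    have h1 := weighted_parseval (fun _ : I => (1 : ℝ)) (fun j i => M i j) (fun _ => 1)
      (by simpa using hM) (v z x)
    simp only [one_mul] at h1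
    refine h1.trans_le ((Finset.sum_le_sum fun i _ => ?_).trans (hc x).le)
    rw [norm_mul, mul_pow, Complex.norm_real, Real.norm_eq_abs, sq_abs]
    refine mul_le_of_le_one_left (sq_nonneg _) ?_
    refine pow_le_one₀ (norm_nonneg _) ((norm_epow_le (hb0 i) _).trans (le_of_eq ?_))
    simp [hz]
  have hright : ∀ z ∈ Complex.re ⁻¹' {(1 : ℝ)}, ‖F z‖ ≤ T := fun z hz => by
    have hz : z.re = 1 := hz
    refine (hFle z).trans ?_
    rw [hz]
    simp only [sub_self, mul_zero, Real.rpow_zero, one_mul, mul_one, Finset.mul_sum]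
    rw [Finset.sum_comm]
    refine Finset.sum_le_sum fun j _ => ?_
    have e : ∀ x, G z x j = ∑ i, (epow (b i) ((-1 / 2 : ℝ) * z + (0 : ℝ)) * (M i j : ℂ)) *
        (c x i : ℂ) := fun x => Finset.sum_congr rfl fun i _ => by ring
    have h1 := weighted_parseval q c (fun i => b i - lam) hb
      (fun i => epow (b i) ((-1 / 2 : ℝ) * z + (0 : ℝ)) * (M i j : ℂ))
    calc ∑ x, q x * (t j ^ α * ‖G z x j‖ ^ 2)
        = t j ^ α * ∑ x, q x * ‖G z x j‖ ^ 2 := by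
          rw [Finset.mul_sum]
          exact Finset.sum_congr rfl fun x _ => by ring
      _ ≤ t j ^ α := by
          refine mul_le_of_le_one_right (Real.rpow_nonneg (ht0 j) _) ?_
          simp only [e]
          refine h1.trans_le ((Finset.sum_le_sum fun i _ => ?_).trans (hM' j).le)
          rw [norm_mul, mul_pow, Complex.norm_real, Real.norm_eq_abs, sq_abs, ← mul_assoc]
          refine mul_le_of_le_one_left (sq_nonneg _) ?_
          rcases (hb0 i).eq_or_lt with h | h
          · simp [epow, ← h]
          · rw [norm_epow h, ← Real.rpow_mul_natCast h.le]
            have : ((((-1 / 2 : ℝ) : ℂ) * z + ((0 : ℝ) : ℂ)).re * ((2 : ℕ) : ℝ)) = -1 := by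
              simp only [Complex.add_re, Complex.re_ofReal_mul, Complex.ofReal_re, hz]
              norm_num
            rw [this, Real.rpow_neg_one, ← div_eq_mul_inv, div_le_one h]
            linarith
  have hθ : F ((1 - 1 / α : ℝ) : ℂ) = (T : ℂ) := by
    have hpr : ∀ x, epow (p x / q x) ((-α : ℝ) * ((1 - 1 / α : ℝ) : ℂ) + (α : ℝ)) =
        ((p x / q x : ℝ) : ℂ) := fun x => by
      rw [← Complex.ofReal_mul, ← Complex.ofReal_add]
      have : -α * (1 - 1 / α) + α = 1 := by field_simp; ring
      rw [this, epow_ofReal (hr0 x) one_ne_zero, Real.rpow_one]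
    have htr : ∀ j, epow (t j) ((α : ℝ) * ((1 - 1 / α : ℝ) : ℂ) + (0 : ℝ)) =
        ((t j ^ (α - 1) : ℝ) : ℂ) := fun j => by
      rw [← Complex.ofReal_mul, ← Complex.ofReal_add]
      have : α * (1 - 1 / α) + 0 = α - 1 := by field_simp; ring
      rw [this, epow_ofReal (ht0 j) (by linarith)]
    have hGr : ∀ x j, G ((1 - 1 / α : ℝ) : ℂ) x j =
        ((∑ i, b i ^ ((1 - α) / (2 * α)) * c x i * M i j : ℝ) : ℂ) := fun x j => by
      rw [Complex.ofReal_sum]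
      refine Finset.sum_congr rfl fun i _ => ?_
      have : (-1 / 2 : ℝ) * (1 - 1 / α) + 0 = (1 - α) / (2 * α) := by field_simp; ring
      simp only [v]
      rw [← Complex.ofReal_mul, ← Complex.ofReal_add, this,
        epow_ofReal (hb0 i) (div_ne_zero (by linarith) (by positivity))]
      push_cast
      ring
    simp only [F, hpr, htr, hGr]
    norm_cast
    calc ∑ x, q x * (p x / q x * ∑ j, t j ^ (α - 1) *
          ((∑ i, b i ^ ((1 - α) / (2 * α)) * c x i * M i j) *
            (∑ i, b i ^ ((1 - α) / (2 * α)) * c x i * M i j)))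
        = ∑ x, ∑ j, t j ^ (α - 1) *
          (p x * (∑ i, b i ^ ((1 - α) / (2 * α)) * c x i * M i j) ^ 2) := by
          refine Finset.sum_congr rfl fun x _ => ?_
          rw [← mul_assoc, mul_div_cancel₀ _ (hq x).ne', Finset.mul_sum]
          exact Finset.sum_congr rfl fun j _ => by ring
      _ = ∑ j, t j ^ α := by
          rw [Finset.sum_comm]
          refine Finset.sum_congr rfl fun j _ => ?_
          rw [← Finset.mul_sum, ← ht]
          rcases (ht0 j).eq_or_lt with h | h
          · rw [← h, Real.zero_rpow hα0.ne', mul_zero]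
          · rw [Real.rpow_sub_one h.ne', div_mul_cancel₀ _ h.ne']
  have hα1 : 1 / α ≤ 1 := by rw [div_le_one hα0]; exact hα.le
  have hα2 : 0 < 1 / α := by positivity
  have key := Complex.HadamardThreeLines.norm_le_interp_of_mem_verticalClosedStrip' (f := F)
    (z := ((1 - 1 / α : ℝ) : ℂ)) (a := Q) (b := T) (l := 0) (u := 1) zero_lt_one
    (by
      simp only [Complex.HadamardThreeLines.verticalClosedStrip, Set.mem_preimage,
        Complex.ofReal_re, Set.mem_Icc]
      constructor <;> linarith)
    hdiff.diffContOnCl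
    (by
      obtain ⟨C, hC⟩ := hbdd
      refine ⟨C, ?_⟩
      rintro _ ⟨z, hz, rfl⟩
      exact hC z hz.1 hz.2)
    hleft hright
  rw [hθ, Complex.norm_real, Real.norm_of_nonneg htpos.le, Complex.ofReal_re] at key
  simp only [sub_zero, div_one, sub_sub_cancel] at key
  rw [hQeq]
  -- `T ≤ Q ^ (1/α) * T ^ (1 - 1/α)` with `T > 0` gives `T ^ (1/α) ≤ Q ^ (1/α)`.
  have h2 : T ^ (1 / α) * T ^ (1 - 1 / α) ≤ Q ^ (1 / α) * T ^ (1 - 1 / α) := by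
    rw [← Real.rpow_add htpos]
    simpa using key
  have h3 := le_of_mul_le_mul_right h2 (Real.rpow_pos_of_pos htpos _)
  exact (Real.rpow_le_rpow_iff htpos.le hQ0 hα2).1 h3

lemma one_le_sum_rpow {X : Type*} [Fintype X]
    (p q : X → ℝ) (hp : ∀ x, 0 ≤ p x) (hp1 : ∑ x, p x = 1)
    (hq : ∀ x, 0 < q x) (hq1 : ∑ x, q x = 1) (α : ℝ) (hα : 1 < α) :
    1 ≤ ∑ x, p x ^ α * q x ^ (1 - α) := by
  have h := Real.rpow_arith_mean_le_arith_mean_rpow Finset.univ q (fun x => p x / q x)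
    (fun x _ => (hq x).le) hq1 (fun x _ => div_nonneg (hp x) (hq x).le) hα.le
  have e : ∑ x, q x * (p x / q x) = 1 := by
    rw [← hp1]
    exact Finset.sum_congr rfl fun x _ => mul_div_cancel₀ _ (hq x).ne'
  rw [e, Real.one_rpow] at h
  refine h.trans_eq (Finset.sum_congr rfl fun x _ => ?_)
  rw [Real.div_rpow (hp x) (hq x).le, Real.rpow_sub (hq x), Real.rpow_one]
  ring

/-! ### Diagonalization and covariance matrices -/

/-- Orthogonal diagonalization of a real symmetric matrix, with the same eigenbasis as `mpow`. -/
lemma exists_diagonalization {m : Type*} [Fintype m] [DecidableEq m] {H : Matrix m m ℝ}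
    (hH : H.IsHermitian) : ∃ (U : Matrix m m ℝ) (d : m → ℝ), U * Uᵀ = 1 ∧ Uᵀ * U = 1 ∧
      Uᵀ * H * U = diagonal d ∧ ∀ r : ℝ, mpow H r = U * diagonal (fun i => d i ^ r) * Uᵀ := by
  have hs : star (hH.eigenvectorUnitary : Matrix m m ℝ)
      = (hH.eigenvectorUnitary : Matrix m m ℝ)ᵀ := by
    rw [star_eq_conjTranspose, conjTranspose_eq_transpose_of_trivial]
  refine ⟨hH.eigenvectorUnitary, hH.eigenvalues, ?_, ?_, ?_, fun r => ?_⟩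
  · rw [← hs]; exact Unitary.coe_mul_star_self _
  · rw [← hs]; exact Unitary.coe_star_mul_self _
  · have := hH.conjStarAlgAut_star_eigenvectorUnitary
    rw [Unitary.conjStarAlgAut_star_apply, hs] at this
    rw [this]
    rfl
  · rw [mpow, dif_pos hH, hs]

lemma covMatrix_apply {X : Type*} [Fintype X] {N : ℕ} (φ : X → Fin N → ℝ) (p : X → ℝ)
    (i j : Fin N) : covMatrix φ p i j = ∑ x, p x * (φ x i * φ x j) := by
  simp [covMatrix, Matrix.sum_apply, vecMulVec_apply]

lemma covMatrix_isHermitian {X : Type*} [Fintype X] {N : ℕ} (φ : X → Fin N → ℝ) (p : X → ℝ) :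
    (covMatrix φ p).IsHermitian := by
  ext i j
  simp [covMatrix_apply, mul_comm]

lemma conj_covMatrix {X : Type*} [Fintype X] {N : ℕ} (φ : X → Fin N → ℝ) (p : X → ℝ)
    (W : Matrix (Fin N) (Fin N) ℝ) :
    Wᵀ * covMatrix φ p * W = covMatrix (fun x => φ x ᵥ* W) p := by
  simp only [covMatrix, Matrix.mul_sum, Matrix.sum_mul, Matrix.mul_smul, Matrix.smul_mul,
    mul_vecMulVec, vecMulVec_mul, mulVec_transpose]

/-! ### The divergence inequality -/

/-- The regularized kernel Rényi divergence is upper bounded by the classical Rényi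
divergence: `D_{α,λ}(Σ_p‖Σ_q) ≤ D_α(p‖q)`. -/
theorem regRenyi_le_classical_renyi {X : Type*} [Fintype X] {N : ℕ}
    (p q : X → ℝ) (hp : ∀ x, 0 ≤ p x) (hp1 : ∑ x, p x = 1)
    (hq : ∀ x, 0 < q x) (hq1 : ∑ x, q x = 1)
    (φ : X → Fin N → ℝ) (hφ : ∀ x, ∑ i, (φ x i) ^ 2 = 1)
    (α lam : ℝ) (hα : 1 < α) (hlam : 0 ≤ lam) :
    regRenyi α lam (covMatrix φ p) (covMatrix φ q)
      ≤ (α - 1)⁻¹ * Real.log (∑ x, p x ^ α * q x ^ (1 - α)) := by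
  have htrA : (covMatrix φ p).trace = 1 := by
    simp only [Matrix.trace, Matrix.diag, covMatrix_apply]
    rw [Finset.sum_comm, ← hp1]
    refine Finset.sum_congr rfl fun x _ => ?_
    rw [← Finset.mul_sum]
    simp only [← sq, hφ, mul_one]
  rw [regRenyi, sandwichedRenyi, htrA, div_one]
  refine mul_le_mul_of_nonneg_left ?_ (inv_nonneg.2 (by linarith))
  set B := covMatrix φ q + lam • (1 : Matrix (Fin N) (Fin N) ℝ) with hB
  have hBh : B.IsHermitian := by
    refine (covMatrix_isHermitian φ q).add ?_
    ext i j
    simp [Matrix.one_apply, eq_comm]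
  obtain ⟨U, b, hU1, hU2, hUB, hUp⟩ := exists_diagonalization hBh
  set P := mpow B ((1 - α) / (2 * α)) with hP
  have hPU : P = U * diagonal (fun i => b i ^ ((1 - α) / (2 * α))) * Uᵀ := hUp _
  have hPt : Pᵀ = P := by
    rw [hPU]
    simp [Matrix.transpose_mul, Matrix.mul_assoc]
  have hXh : (P * covMatrix φ p * P).IsHermitian := by
    have := conj_covMatrix φ p P
    rw [hPt] at this
    rw [this]
    exact covMatrix_isHermitian _ _
  obtain ⟨V, t, hV1, hV2, hVX, hVp⟩ := exists_diagonalization hXh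
  have hT : (mpow (P * covMatrix φ p * P) α).trace = ∑ j, t j ^ α := by
    rw [hVp, Matrix.trace_mul_comm, ← Matrix.mul_assoc, hV2, Matrix.one_mul, Matrix.trace_diagonal]
  rw [hT]
  have hQ1 := one_le_sum_rpow p q hp hp1 hq hq1 α hα
  have hUcov : Uᵀ * covMatrix φ q * U = diagonal (fun i => b i - lam) := by
    have e : covMatrix φ q = B - lam • 1 := by rw [hB]; abel
    rw [e, Matrix.mul_sub, Matrix.sub_mul, hUB, Matrix.mul_smul, Matrix.smul_mul, Matrix.mul_one,
      hU2]
    ext i j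
    by_cases h : i = j <;> simp [h]
  have ht : ∀ j, t j = ∑ x, p x * (∑ i, b i ^ ((1 - α) / (2 * α)) * (φ x ᵥ* U) i *
      (Uᵀ * V) i j) ^ 2 := fun j => by
    have e : Vᵀ * (P * covMatrix φ p * P) * V = (P * V)ᵀ * covMatrix φ p * (P * V) := by
      rw [Matrix.transpose_mul, hPt]
      simp only [Matrix.mul_assoc]
    have e2 := congrFun (congrFun hVX j) j
    rw [e, conj_covMatrix, covMatrix_apply, diagonal_apply_eq] at e2
    rw [← e2]
    refine Finset.sum_congr rfl fun x _ => ?_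
    have e3 : (φ x ᵥ* (P * V)) j =
        ∑ i, b i ^ ((1 - α) / (2 * α)) * (φ x ᵥ* U) i * (Uᵀ * V) i j := by
      rw [hPU, Matrix.mul_assoc, Matrix.mul_assoc, ← vecMul_vecMul, ← vecMul_vecMul]
      change ∑ i, ((φ x ᵥ* U) ᵥ* diagonal (fun i => b i ^ ((1 - α) / (2 * α)))) i *
        (Uᵀ * V) i j = _
      refine Finset.sum_congr rfl fun i _ => ?_
      rw [vecMul_diagonal, mul_comm (_ ^ _)]
    rw [e3, sq]
  rcases le_or_gt (∑ j, t j ^ α) 0 with h0 | hpos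
  · have ht0 : ∀ j, 0 ≤ t j := fun j => by
      rw [ht]
      exact Finset.sum_nonneg fun x _ => mul_nonneg (hp x) (sq_nonneg _)
    have : ∑ j, t j ^ α = 0 :=
      le_antisymm h0 (Finset.sum_nonneg fun j _ => Real.rpow_nonneg (ht0 j) _)
    rw [this, Real.log_zero]
    exact Real.log_nonneg hQ1
  refine Real.log_le_log hpos (sum_rpow_eigenvalues_le p q hp hq α lam hα hlam
    (fun x => φ x ᵥ* U) (Uᵀ * V) b t ?_ ?_ ?_ ?_ ht hpos)
  · intro x
    have : (φ x ᵥ* U) ⬝ᵥ (φ x ᵥ* U) = φ x ⬝ᵥ φ x := by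
      rw [← dotProduct_mulVec, ← mulVec_transpose, mulVec_mulVec, hU1, one_mulVec]
    simpa only [dotProduct, ← sq, hφ] using this
  · intro i i'
    have : (Uᵀ * V) * (Uᵀ * V)ᵀ = 1 := by
      rw [Matrix.transpose_mul, transpose_transpose, Matrix.mul_assoc, ← Matrix.mul_assoc V, hV1,
        Matrix.one_mul, hU2]
    simpa only [Matrix.mul_apply, transpose_apply, Matrix.one_apply] using
      congrFun (congrFun this i) i'
  · intro j
    have : (Uᵀ * V)ᵀ * (Uᵀ * V) = 1 := by
      rw [Matrix.transpose_mul, transpose_transpose, Matrix.mul_assoc, ← Matrix.mul_assoc U, hU1,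
        Matrix.one_mul, hV2]
    have h := congrFun (congrFun this j) j
    rw [Matrix.mul_apply, Matrix.one_apply_eq] at h
    simpa only [transpose_apply, ← sq] using h
  · intro i i'
    rw [← covMatrix_apply (fun x => φ x ᵥ* U), ← conj_covMatrix, hUcov, diagonal_apply]
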